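/- arXiv:1108.6296 — 3 statements merged into one kernel-verified Lean document; each statement's English description precedes it below -/
import Mathlib

section
/- Let K ≥ 1, r ≥ 1, m ≥ 1. Let π be the product measure on W : (∏_{k=1}^K Fin r) → ℝ whose factors are all standard real Gaussians N(0,1). For j = 1,…,m let a_{j,1},…,a_{j,K} ∈ ℝ^r, and let t_1,…,t_m ∈ ℝ. Then the pushforward of π under W ↦ Σ_{j=1}^m t_j · g_W(a_{j,1},…,a_{j,K}) equals the real Gaussian measure with mean 0 and variance Σ_{j=1}^m Σ_{j'=1}^m t_j t_{j'} ∏_{k=1}^K ⟨a_{j,k}, a_{j',k}⟩. -/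
open scoped BigOperators NNReal
open MeasureTheory ProbabilityTheory

/-! A linear combination of contractions of `W` with the pure tensors `a j 1 ⊗ ⋯ ⊗ a j K` is the
single linear form `W ↦ ⟨W, c⟩` with `c = ∑ j, t j • (a j 1 ⊗ ⋯ ⊗ a j K)`. For a standard Gaussian
core it is Gaussian, centred, of variance `⟨c, c⟩`, which expands bilinearly into inner products of
pure tensors, and these factor over the modes. -/

section PureTensor

variable {ι R : Type*} {κ : ι → Type*} [Fintype ι] [CommSemiring R]

/-- The pure (rank-one) tensor `a₁ ⊗ ⋯ ⊗ a_K` in coordinates. The modes are indexed by `ι` and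
mode `k` by `κ k`, so that `W ⬝ᵥ pureTensor a` is the Tucker contraction `W ×₁ a₁ ⋯ ×_K a_K`. -/
def pureTensor (a : ∀ k, κ k → R) (i : ∀ k, κ k) : R := ∏ k, a k (i k)

lemma pureTensor_dotProduct_pureTensor [DecidableEq ι] [∀ k, Fintype (κ k)]
    (a b : ∀ k, κ k → R) :
    pureTensor a ⬝ᵥ pureTensor b = ∏ k, a k ⬝ᵥ b k := by
  simp only [dotProduct, pureTensor, ← Finset.prod_mul_distrib, Fintype.prod_sum]

end PureTensor

lemma sum_smul_dotProduct_sum_smul {ι J J' R : Type*} [Fintype ι] [Fintype J] [Fintype J']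
    [CommSemiring R] (s : J → R) (t : J' → R) (u : J → ι → R) (v : J' → ι → R) :
    (∑ j, s j • u j) ⬝ᵥ (∑ j', t j' • v j') = ∑ j, ∑ j', s j * t j' * (u j ⬝ᵥ v j') := by
  simp_rw [sum_dotProduct, dotProduct_sum, smul_dotProduct, dotProduct_smul, smul_eq_mul,
    mul_assoc]

section LinearForm

variable {ι : Type*} [Fintype ι]

lemma integral_dotProduct_pi {μ : ι → Measure ℝ} [∀ i, IsProbabilityMeasure (μ i)]
    (hμ : ∀ i, Integrable id (μ i)) (c : ι → ℝ) :
    ∫ W, W ⬝ᵥ c ∂Measure.pi μ = (fun i ↦ ∫ x, x ∂μ i) ⬝ᵥ c := by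
  simp only [dotProduct]
  rw [integral_finsetSum _ fun i _ ↦ (integrable_eval (hμ i)).mul_const (c i)]
  simp only [integral_mul_const, integral_eval]

lemma variance_dotProduct_pi {μ : ι → Measure ℝ} [∀ i, IsProbabilityMeasure (μ i)]
    (hμ : ∀ i, MemLp id 2 (μ i)) (c : ι → ℝ) :
    Var[fun W ↦ W ⬝ᵥ c; Measure.pi μ] = ∑ i, Var[id; μ i] * c i ^ 2 := by
  have hsum : (fun W : ι → ℝ ↦ W ⬝ᵥ c) = ∑ i, fun W ↦ W i * c i := by
    ext W
    simp [dotProduct]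
  rw [hsum, variance_sum_pi (X := fun i x ↦ x * c i) fun i ↦ (hμ i).mul_const (c i)]
  exact Finset.sum_congr rfl fun i _ ↦ variance_mul_const (c i) id (μ i)

lemma isGaussian_pi {E : ι → Type*} [∀ i, NormedAddCommGroup (E i)] [∀ i, NormedSpace ℝ (E i)]
    [∀ i, MeasurableSpace (E i)] [∀ i, BorelSpace (E i)] [∀ i, SecondCountableTopology (E i)]
    [∀ i, CompleteSpace (E i)] (μ : ∀ i, Measure (E i)) [∀ i, IsGaussian (μ i)] :
    IsGaussian (Measure.pi μ) := by
  have hindep : iIndepFun (fun i (W : ∀ i, E i) ↦ W i) (Measure.pi μ) :=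
    iIndepFun_pi (X := fun _ x ↦ x) fun _ ↦ aemeasurable_id
  have hlaw (i : ι) : HasGaussianLaw (fun W : ∀ i, E i ↦ W i) (Measure.pi μ) :=
    (measurePreserving_eval μ i).hasLaw.hasGaussianLaw
  simpa using (hindep.hasGaussianLaw hlaw).isGaussian_map

lemma map_dotProduct_pi_gaussianReal (m : ι → ℝ) (v : ι → ℝ≥0) (c : ι → ℝ) :
    (Measure.pi fun i ↦ gaussianReal (m i) (v i)).map (fun W ↦ W ⬝ᵥ c) =
      gaussianReal (m ⬝ᵥ c) (∑ i, v i * c i ^ 2).toNNReal := by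
  have hlaw : HasGaussianLaw (fun W ↦ W ⬝ᵥ c) (Measure.pi fun i ↦ gaussianReal (m i) (v i)) := by
    have := isGaussian_pi fun i ↦ gaussianReal (m i) (v i)
    exact ⟨isGaussian_map ((dotProductBilin ℝ ℝ).flip c).toContinuousLinearMap⟩
  rw [hlaw.map_eq_gaussianReal, integral_dotProduct_pi fun _ ↦ IsGaussian.integrable_id,
    variance_dotProduct_pi fun _ ↦ IsGaussian.memLp_two_id]
  simp only [integral_id_gaussianReal, variance_id_gaussianReal]

end LinearForm

theorem map_pi_gaussian_linear_combination_tucker_general {ι J : Type*} {κ : ι → Type*}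
    [Fintype ι] [DecidableEq ι] [∀ k, Fintype (κ k)] [Fintype J]
    (a : J → ∀ k, κ k → ℝ) (t : J → ℝ) :
    (Measure.pi fun _ : (∀ k, κ k) ↦ gaussianReal 0 1).map
        (fun W ↦ ∑ j, t j * (W ⬝ᵥ pureTensor (a j))) =
      gaussianReal 0 (∑ j, ∑ j', t j * t j' * ∏ k, a j k ⬝ᵥ a j' k).toNNReal := by
  have hform (W : (∀ k, κ k) → ℝ) :
      ∑ j, t j * (W ⬝ᵥ pureTensor (a j)) = W ⬝ᵥ ∑ j, t j • pureTensor (a j) := by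
    simp only [dotProduct_sum, dotProduct_smul, smul_eq_mul]
  have hvar : ∑ i, (∑ j, t j • pureTensor (a j)) i ^ 2 =
      ∑ j, ∑ j', t j * t j' * ∏ k, a j k ⬝ᵥ a j' k := by
    simp_rw [← pureTensor_dotProduct_pureTensor, ← sum_smul_dotProduct_sum_smul, dotProduct, sq]
  simp_rw [hform]
  rw [map_dotProduct_pi_gaussianReal, ← hvar]
  simp

/-- With an i.i.d. standard normal core tensor `W`, any linear
combination of Tucker contractions `∑ j, t j * g_W(a j 1, …, a j K)` is
Gaussian with mean 0 and variance
`∑ j, ∑ j', t j * t j' * ∏ k, ⟨a j k, a j' k⟩`. -/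
theorem map_pi_gaussian_linear_combination_tucker
    (K r m : ℕ) (hK : 1 ≤ K) (hr : 1 ≤ r) (hm : 1 ≤ m)
    (a : Fin m → Fin K → Fin r → ℝ) (t : Fin m → ℝ) :
    Measure.map
        (fun W : (Fin K → Fin r) → ℝ =>
          ∑ j : Fin m, t j *
            ∑ i : Fin K → Fin r, W i * ∏ k : Fin K, a j k (i k))
        (Measure.pi fun _ : Fin K → Fin r => gaussianReal 0 1)
      = gaussianReal 0
          (∑ j : Fin m, ∑ j' : Fin m,
              t j * t j' * ∏ k : Fin K, ∑ x : Fin r, a j k x * a j' k x).toNNReal :=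
  map_pi_gaussian_linear_combination_tucker_general a t
end

section
/- (Theorem 1, finite-dimensional marginal form.) Let K ≥ 1 and m ≥ 1, let t_1,…,t_m ∈ ℝ, and let Σ : Fin K → Fin m → Fin m → ℝ. Suppose for each r ∈ ℕ we are given a dimension d_r ≥ 1 and feature vectors a^{(r)}_{j,k} ∈ ℝ^{d_r} (j = 1,…,m, k = 1,…,K) such that for all k, j, j', ⟨a^{(r)}_{j,k}, a^{(r)}_{j',k}⟩ → Σ k j j' as r → ∞. Let π_r be the product measure on W : (∏_{k=1}^K Fin d_r) → ℝ with all factors standard Gaussian N(0,1), and let μ_r be the pushforward of π_r under W ↦ Σ_{j=1}^m t_j Σ_{i ∈ ∏_k Fin d_r} W(i) ∏_{k=1}^K a^{(r)}_{j,k}(i_k). Then μ_r converges weakly to the real Gaussian measure N(0, Σ_{j,j'} t_j t_{j'} ∏_{k=1}^K Σ k j j') as r → ∞. -/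
open scoped BigOperators NNReal
open MeasureTheory ProbabilityTheory Filter

/-! An entry of the Tucker tensor is the inner product of the core tensor `W` with the rank-one
tensor of its feature vectors, so a linear combination of entries is one linear functional of `W`.
Under a standard Gaussian vector the functional `⟪x, ·⟫` has law `N(0, ‖x‖²)`, so the combination is
exactly Gaussian at every rank. Inner products of rank-one tensors factor over the modes, so its
variance is a polynomial in the mode-wise feature inner products and hence converges; the laws
converge because `N(0, v)` is weakly continuous in `v`, including at `v = 0`. -/

open scoped InnerProductSpace

theorem continuous_gaussianReal :
    Continuous (Y := ProbabilityMeasure ℝ)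
      fun p : ℝ × ℝ≥0 ↦ ⟨gaussianReal p.1 p.2, inferInstance⟩ := by
  refine continuous_iff_seqContinuous.2 fun p q hp ↦ ?_
  refine ProbabilityMeasure.tendsto_iff_tendsto_charFun.2 fun s ↦ ?_
  have hcharFun : Continuous fun p : ℝ × ℝ≥0 ↦ charFun (gaussianReal p.1 p.2) s := by
    simp only [charFun_gaussianReal]
    fun_prop
  exact (hcharFun.tendsto q).comp hp

theorem map_inner_stdGaussian {E : Type*} [NormedAddCommGroup E] [InnerProductSpace ℝ E]
    [FiniteDimensional ℝ E] [MeasurableSpace E] [BorelSpace E] (x : E) :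
    (stdGaussian E).map (fun y ↦ ⟪x, y⟫_ℝ) = gaussianReal 0 (‖x‖ ^ 2).toNNReal := by
  have h := IsGaussian.map_eq_gaussianReal (μ := stdGaussian E) (innerSL ℝ x)
  rwa [integral_strongDual_stdGaussian, variance_dual_stdGaussian, innerSL_apply_norm] at h

theorem map_inner_toLp_pi_gaussianReal {ι : Type*} [Fintype ι] (x : EuclideanSpace ℝ ι) :
    (Measure.pi fun _ : ι ↦ gaussianReal 0 1).map (fun W ↦ ⟪x, WithLp.toLp 2 W⟫_ℝ) =
      gaussianReal 0 (‖x‖ ^ 2).toNNReal := by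
  rw [← map_inner_stdGaussian, ← map_pi_eq_stdGaussian,
    Measure.map_map (by fun_prop) (by fun_prop), Function.comp_def]

theorem norm_sum_smul_sq {ι E : Type*} [Fintype ι] [SeminormedAddCommGroup E]
    [InnerProductSpace ℝ E] (t : ι → ℝ) (x : ι → E) :
    ‖∑ i, t i • x i‖ ^ 2 = ∑ i, ∑ j, t i * t j * ⟪x i, x j⟫_ℝ := by
  rw [← real_inner_self_eq_norm_sq, sum_inner]
  simp_rw [inner_sum, real_inner_smul_left, real_inner_smul_right, mul_assoc]

section RankOneTensor

variable {κ : Type*} [Fintype κ] {ρ : κ → Type*}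

/-- The rank-one tensor `⨂ₖ φ k` of the vectors `φ k`, encoded by its coordinates as a vector of
the Euclidean space on multi-indices, so that its inner product is the tensor-product one. -/
def rankOneTensor (φ : ∀ k, ρ k → ℝ) : EuclideanSpace ℝ (∀ k, ρ k) :=
  WithLp.toLp 2 fun i ↦ ∏ k, φ k (i k)

variable [DecidableEq κ] [∀ k, Fintype (ρ k)]

theorem inner_rankOneTensor_toLp (φ : ∀ k, ρ k → ℝ) (W : (∀ k, ρ k) → ℝ) :
    ⟪rankOneTensor φ, WithLp.toLp 2 W⟫_ℝ = ∑ i, W i * ∏ k, φ k (i k) :=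
  rfl

theorem inner_rankOneTensor (φ ψ : ∀ k, ρ k → ℝ) :
    ⟪rankOneTensor φ, rankOneTensor ψ⟫_ℝ = ∏ k, ∑ x, φ k x * ψ k x := by
  calc ⟪rankOneTensor φ, rankOneTensor ψ⟫_ℝ
      = ∑ i : ∀ k, ρ k, (∏ k, ψ k (i k)) * ∏ k, φ k (i k) := inner_rankOneTensor_toLp φ _
    _ = ∑ i : ∀ k, ρ k, ∏ k, φ k (i k) * ψ k (i k) := by
      simp only [Finset.prod_mul_distrib, mul_comm]
    _ = ∏ k, ∑ x, φ k x * ψ k x :=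
      (Fintype.prod_sum fun k x ↦ φ k x * ψ k x).symm

theorem map_tucker_pi_gaussianReal {J : Type*} [Fintype J] (t : J → ℝ) (φ : J → ∀ k, ρ k → ℝ) :
    (Measure.pi fun _ : ∀ k, ρ k ↦ gaussianReal 0 1).map
        (fun W ↦ ∑ j, t j * ∑ i, W i * ∏ k, φ j k (i k)) =
      gaussianReal 0
        (∑ j, ∑ j', t j * t j' * ∏ k, ∑ x, φ j k x * φ j' k x).toNNReal := by
  have h := map_inner_toLp_pi_gaussianReal (∑ j, t j • rankOneTensor (φ j))
  simpa only [norm_sum_smul_sq, sum_inner, real_inner_smul_left, inner_rankOneTensor_toLp,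
    inner_rankOneTensor] using h

end RankOneTensor

theorem tucker_gaussian_process_convergence_general {R κ J : Type*} {l : Filter R}
    [Fintype κ] [DecidableEq κ] [Fintype J] (t : J → ℝ) (Sig : κ → J → J → ℝ)
    (ρ : R → κ → Type*) [∀ r k, Fintype (ρ r k)] (a : ∀ r, J → ∀ k, ρ r k → ℝ)
    (hconv : ∀ k j j', Tendsto (fun r ↦ ∑ x, a r j k x * a r j' k x) l (nhds (Sig k j j'))) :
    TendstoInDistribution
      (fun r (W : (∀ k, ρ r k) → ℝ) ↦ ∑ j, t j * ∑ i, W i * ∏ k, a r j k (i k)) l id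
      (fun r ↦ Measure.pi fun _ : ∀ k, ρ r k ↦ gaussianReal 0 1)
      (gaussianReal 0 (∑ j, ∑ j', t j * t j' * ∏ k, Sig k j j').toNNReal) where
  forall_aemeasurable r := Measurable.aemeasurable (by fun_prop)
  tendsto := by
    have hvar : Tendsto (fun r ↦ ∑ j, ∑ j', t j * t j' * ∏ k, ∑ x, a r j k x * a r j' k x) l
        (nhds (∑ j, ∑ j', t j * t j' * ∏ k, Sig k j j')) :=
      tendsto_finsetSum _ fun j _ ↦ tendsto_finsetSum _ fun j' _ ↦
        (tendsto_finsetProd _ fun k _ ↦ hconv k j j').const_mul _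
    simp only [map_tucker_pi_gaussianReal, Measure.map_id]
    exact (continuous_gaussianReal.tendsto _).comp
      (tendsto_const_nhds.prodMk_nhds (tendsto_real_toNNReal hvar))

/-- Theorem 1, finite-dimensional marginal form: if the mode-wise
feature inner products converge to covariance values `Σ k j j'`, then the law of
the linear combination `∑ j, t j * g^{(r)}_j` of entries of the Tucker tensor
with i.i.d. standard normal core converges weakly to the Gaussian with variance
`∑ j j', t j * t j' * ∏ k, Σ k j j'`. -/
theorem tucker_gaussian_process_convergence
    (K m : ℕ) (hK : 1 ≤ K) (hm : 1 ≤ m) (t : Fin m → ℝ)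
    (Sig : Fin K → Fin m → Fin m → ℝ)
    (d : ℕ → ℕ) (hd : ∀ r : ℕ, 1 ≤ d r)
    (a : (r : ℕ) → Fin m → Fin K → Fin (d r) → ℝ)
    (hconv : ∀ (k : Fin K) (j j' : Fin m),
      Tendsto (fun r : ℕ => ∑ x : Fin (d r), a r j k x * a r j' k x) atTop
        (nhds (Sig k j j')))
    (f : BoundedContinuousFunction ℝ ℝ) :
    Tendsto
      (fun r : ℕ => ∫ y, f y ∂(Measure.map
        (fun W : (Fin K → Fin (d r)) → ℝ =>
          ∑ j : Fin m, t j *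
            ∑ i : Fin K → Fin (d r), W i * ∏ k : Fin K, a r j k (i k))
        (Measure.pi fun _ : Fin K → Fin (d r) => gaussianReal 0 1)))
      atTop
      (nhds (∫ y, f y ∂(gaussianReal 0
        (∑ j : Fin m, ∑ j' : Fin m,
            t j * t j' * ∏ k : Fin K, Sig k j j').toNNReal))) := by
  simpa only [ProbabilityMeasure.coe_mk, Measure.map_id] using
    ProbabilityMeasure.tendsto_iff_forall_integral_tendsto.1
      (tucker_gaussian_process_convergence_general t Sig (fun r _ ↦ Fin (d r)) a hconv).tendsto f
end

section
/- Let ν > 0 and s > 0 be real. Let μ be the pushforward, under the map (y, τ) ↦ y / √τ, of the product of the real Gaussian measure N(0, s²) on ℝ and the Gamma distribution with shape ν/2 and rate ν/2 on (0, ∞). Then μ has density (with respect to Lebesgue measure on ℝ) equal to the Student t density with ν degrees of freedom and scale s: x ↦ Γ((ν+1)/2) / (Γ(ν/2) √(νπ) · s) · (1 + x²/(ν s²))^{−(ν+1)/2}. -/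
open scoped BigOperators NNReal
open MeasureTheory ProbabilityTheory

/-!
Conditionally on `τ`, the variable `x = y / √τ` is centered Gaussian with variance `v / τ`. The
gamma family is conjugate to a Gaussian with known mean and unknown precision: the joint density
of `(x, τ)` is a function of `x` alone times a gamma density in `τ`. Integrating out `τ` leaves
that function of `x`, which is the Student t density.
-/

section MeasureMixture

variable {α β γ : Type*} [MeasurableSpace α] [MeasurableSpace β] [MeasurableSpace γ]

lemma map_prod_eq_bind_map (μ : Measure α) (ν : Measure β) [SFinite μ] [SFinite ν]
    {f : α × β → γ} (hf : Measurable f) :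
    (μ.prod ν).map f = ν.bind fun b ↦ μ.map fun a ↦ f (a, b) := by
  have map_section_apply {A : Set γ} (hA : MeasurableSet A) (b : β) :
      μ.map (fun a ↦ f (a, b)) A = μ ((fun a ↦ (a, b)) ⁻¹' (f ⁻¹' A)) :=
    Measure.map_apply (by fun_prop) hA
  have measurable_map_section : Measurable fun b ↦ μ.map fun a ↦ f (a, b) :=
    Measure.measurable_of_measurable_coe _ fun A hA ↦ by
      simpa only [map_section_apply hA] using measurable_measure_prodMk_right (hf hA)
  ext A hA
  simp only [Measure.map_apply hf hA, Measure.prod_apply_symm (hf hA),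
    Measure.bind_apply hA measurable_map_section.aemeasurable, map_section_apply hA]

lemma withDensity_bind_withDensity (μ : Measure α) (ν : Measure β) [SFinite μ] [SFinite ν]
    {g : β → ENNReal} {f : β → α → ENNReal} (hg : Measurable g)
    (hf : Measurable (Function.uncurry f)) :
    (ν.withDensity g).bind (fun b ↦ μ.withDensity (f b)) =
      μ.withDensity fun a ↦ ∫⁻ b, g b * f b a ∂ν := by
  have measurable_setLIntegral (A : Set α) : Measurable fun b ↦ ∫⁻ a in A, f b a ∂μ :=
    hf.lintegral_prod_right
  have measurable_withDensity : Measurable fun b ↦ μ.withDensity (f b) :=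
    Measure.measurable_of_measurable_coe _ fun A hA ↦ by
      simpa only [withDensity_apply _ hA] using measurable_setLIntegral A
  ext A hA
  calc (ν.withDensity g).bind (fun b ↦ μ.withDensity (f b)) A
      = ∫⁻ b, g b * ∫⁻ a in A, f b a ∂μ ∂ν := by
        simp only [Measure.bind_apply hA measurable_withDensity.aemeasurable,
          withDensity_apply _ hA]
        exact lintegral_withDensity_eq_lintegral_mul _ hg (measurable_setLIntegral A)
    _ = ∫⁻ b, ∫⁻ a in A, g b * f b a ∂μ ∂ν :=
        lintegral_congr fun b ↦ (lintegral_const_mul _ hf.of_uncurry_left).symm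
    _ = ∫⁻ a in A, ∫⁻ b, g b * f b a ∂ν ∂μ :=
        lintegral_lintegral_swap ((hg.comp measurable_fst).mul hf).aemeasurable
    _ = μ.withDensity (fun a ↦ ∫⁻ b, g b * f b a ∂ν) A := (withDensity_apply _ hA).symm

end MeasureMixture

/-- The density of the Student t distribution with `ν` degrees of freedom, location `0` and
scale `s`. A location `m` is obtained by evaluating at `x - m`. -/
noncomputable def studentTPDFReal (ν s x : ℝ) : ℝ :=
  Real.Gamma ((ν + 1) / 2) / (Real.Gamma (ν / 2) * √(ν * Real.pi) * s)
    * (1 + x ^ 2 / (ν * s ^ 2)) ^ (-((ν + 1) / 2))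

lemma studentTPDFReal_nonneg {ν s : ℝ} (hν : 0 ≤ ν) (hs : 0 ≤ s) (x : ℝ) :
    0 ≤ studentTPDFReal ν s x := by
  have : 0 ≤ Real.Gamma (ν / 2) := Real.Gamma_nonneg_of_nonneg (by positivity)
  unfold studentTPDFReal
  positivity

lemma studentTPDFReal_two_mul_sqrt {a r v : ℝ} (ha : 0 < a) (hr : 0 < r) (hv : 0 < v) (x : ℝ) :
    studentTPDFReal (2 * a) √(r * v / a) x =
      Real.Gamma (a + 1 / 2) / (Real.Gamma a * √(2 * Real.pi * v))
        * (r ^ a / (r + x ^ 2 / (2 * v)) ^ (a + 1 / 2)) := by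
  have hscale : √(2 * a * Real.pi) * √(r * v / a) = √(2 * Real.pi * v) * √r := by
    rw [← Real.sqrt_mul (by positivity), ← Real.sqrt_mul (by positivity)]
    congr 1
    field_simp
  have hbase : 1 + x ^ 2 / (2 * a * √(r * v / a) ^ 2) = (r + x ^ 2 / (2 * v)) / r := by
    rw [Real.sq_sqrt (by positivity)]
    field_simp
  have hrpow : r ^ (a + 1 / 2) = r ^ a * √r := by
    rw [Real.rpow_add hr, Real.sqrt_eq_rpow]
  rw [studentTPDFReal, hbase, show (2 * a + 1) / 2 = a + 1 / 2 by ring,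
    mul_div_cancel_left₀ a two_ne_zero, mul_assoc (Real.Gamma a), hscale,
    Real.rpow_neg (by positivity), Real.div_rpow (by positivity) hr.le, hrpow]
  have hsqrt : √r ≠ 0 := by positivity
  field_simp

section GammaGaussian

variable {a r : ℝ} {v : ℝ≥0}

lemma measurable_gammaPDF (a r : ℝ) : Measurable (gammaPDF a r) :=
  (measurable_gammaPDFReal a r).ennreal_ofReal

lemma ae_pos_gammaMeasure (a r : ℝ) : ∀ᵐ τ ∂gammaMeasure a r, 0 < τ := by
  rw [gammaMeasure, ae_withDensity_iff (measurable_gammaPDF a r)]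
  filter_upwards [Measure.ae_ne volume 0] with τ hτ hpdf
  exact (not_lt.mp fun h ↦ hpdf (gammaPDF_of_neg h)).lt_of_ne' hτ

-- For `τ ≤ 0` both sides are the Dirac mass at `0`, because `√τ = 0` and `x / 0 = 0`.
lemma gaussianReal_map_div_sqrt (m : ℝ) (v : ℝ≥0) (τ : ℝ) :
    (gaussianReal m v).map (· / √τ) = gaussianReal (m / √τ) (v / τ.toNNReal) := by
  rw [gaussianReal_map_div_const]
  congr 2
  ext
  simp [Real.sq_sqrt']

lemma gammaPDFReal_mul_gaussianPDFReal {τ : ℝ} (ha : 0 < a) (hr : 0 < r) (hv : v ≠ 0)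
    (hτ : 0 < τ) (m x : ℝ) :
    gammaPDFReal a r τ * gaussianPDFReal m (v / τ.toNNReal) x =
      studentTPDFReal (2 * a) √(r * v / a) (x - m)
        * gammaPDFReal (a + 1 / 2) (r + (x - m) ^ 2 / (2 * v)) τ := by
  have hv' : 0 < (v : ℝ) := by positivity
  have hexp : Real.exp (-(r * τ)) * Real.exp (-(x - m) ^ 2 / (2 * (v / τ))) =
      Real.exp (-((r + (x - m) ^ 2 / (2 * v)) * τ)) := by
    rw [← Real.exp_add]
    congr 1
    field_simp
    ring
  have hpow : τ ^ (a + 1 / 2 - 1) = τ ^ (a - 1) * √τ := by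
    rw [Real.sqrt_eq_rpow, ← Real.rpow_add hτ]
    ring_nf
  have hsqrt : √(2 * Real.pi * (v / τ)) = √(2 * Real.pi * v) / √τ := by
    rw [← mul_div_assoc, Real.sqrt_div (by positivity)]
  have : (r + (x - m) ^ 2 / (2 * v)) ^ (a + 1 / 2) ≠ 0 := by positivity
  rw [studentTPDFReal_two_mul_sqrt ha hr hv', gaussianPDFReal, NNReal.coe_div,
    Real.coe_toNNReal _ hτ.le, gammaPDFReal, if_pos hτ.le, gammaPDFReal, if_pos hτ.le,
    ← hexp, hpow, hsqrt]
  field_simp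

lemma lintegral_gammaPDF_mul_gaussianPDF (ha : 0 < a) (hr : 0 < r) (hv : v ≠ 0) (m x : ℝ) :
    ∫⁻ τ, gammaPDF a r τ * gaussianPDF m (v / τ.toNNReal) x =
      ENNReal.ofReal (studentTPDFReal (2 * a) √(r * v / a) (x - m)) := by
  set r' := r + (x - m) ^ 2 / (2 * v)
  have hr' : 0 < r' := by positivity
  have conjugacy : ∀ᵐ τ : ℝ, gammaPDF a r τ * gaussianPDF m (v / τ.toNNReal) x =
      ENNReal.ofReal (studentTPDFReal (2 * a) √(r * v / a) (x - m))
        * gammaPDF (a + 1 / 2) r' τ := by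
    filter_upwards [Measure.ae_ne volume 0] with τ hτ
    rcases hτ.lt_or_gt with hneg | hpos
    · simp only [gammaPDF_of_neg hneg, zero_mul, mul_zero]
    · rw [gammaPDF, gammaPDF, gaussianPDF,
        ← ENNReal.ofReal_mul (gammaPDFReal_nonneg ha hr τ),
        ← ENNReal.ofReal_mul (studentTPDFReal_nonneg (by positivity) (Real.sqrt_nonneg _) _),
        gammaPDFReal_mul_gaussianPDFReal ha hr hv hpos]
  rw [lintegral_congr_ae conjugacy, lintegral_const_mul' _ _ ENNReal.ofReal_ne_top,
    lintegral_gammaPDF_eq_one (by positivity) hr', mul_one]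

theorem gammaMeasure_bind_gaussianReal (ha : 0 < a) (hr : 0 < r) (hv : v ≠ 0) (m : ℝ) :
    (gammaMeasure a r).bind (fun τ ↦ gaussianReal m (v / τ.toNNReal)) =
      volume.withDensity fun x ↦
        ENNReal.ofReal (studentTPDFReal (2 * a) √(r * v / a) (x - m)) := by
  have gaussian_density : ∀ᵐ τ ∂gammaMeasure a r, gaussianReal m (v / τ.toNNReal) =
      volume.withDensity (gaussianPDF m (v / τ.toNNReal)) := by
    filter_upwards [ae_pos_gammaMeasure a r] with τ hτ
    exact gaussianReal_of_var_ne_zero m (div_ne_zero hv (Real.toNNReal_pos.mpr hτ).ne')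
  have measurable_joint :
      Measurable (Function.uncurry fun τ : ℝ ↦ gaussianPDF m (v / τ.toNNReal)) :=
    measurable_uncurry_gaussianPDF.comp
      (by fun_prop : Measurable fun p : ℝ × ℝ ↦ (m, v / p.1.toNNReal, p.2))
  rw [Measure.bind_congr_right gaussian_density, gammaMeasure,
    withDensity_bind_withDensity _ _ (measurable_gammaPDF a r) measurable_joint]
  simp only [lintegral_gammaPDF_mul_gaussianPDF ha hr hv]

theorem gaussian_gamma_scale_mixture_is_student_t_general (ha : 0 < a) (hr : 0 < r)
    (hv : v ≠ 0) :
    Measure.map (fun p : ℝ × ℝ ↦ p.1 / √p.2) ((gaussianReal 0 v).prod (gammaMeasure a r)) =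
      volume.withDensity fun x ↦ ENNReal.ofReal (studentTPDFReal (2 * a) √(r * v / a) x) := by
  have : IsProbabilityMeasure (gammaMeasure a r) := isProbabilityMeasure_gammaMeasure ha hr
  rw [map_prod_eq_bind_map _ _ (by fun_prop)]
  simp only [gaussianReal_map_div_sqrt, zero_div, gammaMeasure_bind_gaussianReal ha hr hv,
    sub_zero]

end GammaGaussian

/-- The scale mixture of a centered Gaussian `N(0, s²)` with a
`Gamma(ν/2, rate ν/2)` precision, i.e. the law of `y / √τ`, has the Student t
density with `ν` degrees of freedom and scale `s`. -/
theorem gaussian_gamma_scale_mixture_is_student_t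
    (ν s : ℝ) (hν : 0 < ν) (hs : 0 < s) :
    Measure.map (fun p : ℝ × ℝ => p.1 / Real.sqrt p.2)
        ((gaussianReal 0 (s ^ 2).toNNReal).prod (gammaMeasure (ν / 2) (ν / 2)))
      = volume.withDensity (fun x : ℝ => ENNReal.ofReal
          (Real.Gamma ((ν + 1) / 2)
              / (Real.Gamma (ν / 2) * Real.sqrt (ν * Real.pi) * s)
            * (1 + x ^ 2 / (ν * s ^ 2)) ^ (-((ν + 1) / 2)))) := by
  have hscale : √(ν / 2 * (s ^ 2).toNNReal / (ν / 2)) = s := by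
    rw [Real.coe_toNNReal _ (sq_nonneg s), mul_div_cancel_left₀ _ (half_pos hν).ne',
      Real.sqrt_sq hs.le]
  rw [gaussian_gamma_scale_mixture_is_student_t_general (half_pos hν) (half_pos hν)
    (Real.toNNReal_pos.mpr (pow_pos hs 2)).ne', hscale, mul_div_cancel₀ ν two_ne_zero]
  simp only [studentTPDFReal]
end
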